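/- arXiv:1911.08154 — 3 statements merged into one kernel-verified Lean document; each statement's English description precedes it below -/
import Mathlib

section
/- For every integer k ≥ 2, every forest G satisfies α_k(G) + μ_k(G) = |V(G)|, i.e., every forest is a k-König-Egerváry graph. -/
open SimpleGraph

/-- `l` is a (not necessarily induced) `k`-path in `G`: a list of `k` pairwise distinct
vertices in which consecutive vertices are adjacent. -/
def IsKPath {V : Type*} (G : SimpleGraph V) (k : ℕ) (l : List V) : Prop :=
  l.length = k ∧ l.Nodup ∧ l.Chain' G.Adj

/-- A `k`-matching in `G`: a finite set of pairwise vertex-disjoint `k`-paths. -/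
def IsKMatching {V : Type*} (G : SimpleGraph V) (k : ℕ) (M : Finset (List V)) : Prop :=
  (∀ l ∈ M, IsKPath G k l) ∧
    (M : Set (List V)).Pairwise fun l₁ l₂ => ∀ v ∈ l₁, v ∉ l₂

/-- The `k`-matching number `μ_k(G)`: the maximum cardinality of a `k`-matching. -/
noncomputable def kMatchNum {V : Type*} (G : SimpleGraph V) (k : ℕ) : ℕ :=
  sSup {n | ∃ M : Finset (List V), IsKMatching G k M ∧ M.card = n}

/-- A maximum `k`-matching: a `k`-matching of cardinality `μ_k(G)`. -/
def IsMaxKMatching {V : Type*} (G : SimpleGraph V) (k : ℕ) (M : Finset (List V)) : Prop :=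
  IsKMatching G k M ∧ M.card = kMatchNum G k

/-- A `k`-independent set: a set of vertices whose induced subgraph contains no `k`-path. -/
def IsKIndepSet {V : Type*} (G : SimpleGraph V) (k : ℕ) (S : Finset V) : Prop :=
  ∀ l : List V, IsKPath G k l → ¬ (∀ v ∈ l, v ∈ S)

/-- The `k`-independence number `α_k(G)`. -/
noncomputable def kIndepNum {V : Type*} (G : SimpleGraph V) (k : ℕ) : ℕ :=
  sSup {n | ∃ S : Finset V, IsKIndepSet G k S ∧ S.card = n}

/-- A `k`-vertex cover: a set of vertices meeting every `k`-path of `G`. -/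
def IsKCover {V : Type*} (G : SimpleGraph V) (k : ℕ) (C : Finset V) : Prop :=
  ∀ l : List V, IsKPath G k l → ∃ v ∈ l, v ∈ C

/-- The `k`-vertex cover number `τ_k(G)`. -/
noncomputable def kCoverNum {V : Type*} (G : SimpleGraph V) (k : ℕ) : ℕ :=
  sInf {n | ∃ C : Finset V, IsKCover G k C ∧ C.card = n}

/-- A dissociation set: a set of vertices inducing a subgraph of maximum degree at most 1,
i.e. every vertex of `S` has at most one neighbour inside `S`. -/
def IsDissocSet {V : Type*} (G : SimpleGraph V) (S : Finset V) : Prop :=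
  ∀ v ∈ S, ∀ u ∈ S, ∀ w ∈ S, G.Adj v u → G.Adj v w → u = w

/-- The dissociation number `α₃(G)`. -/
noncomputable def dissNum {V : Type*} (G : SimpleGraph V) : ℕ :=
  sSup {n | ∃ S : Finset V, IsDissocSet G S ∧ S.card = n}

/-- A maximum dissociation set: a dissociation set of cardinality `α₃(G)`. -/
def IsMaxDissocSet {V : Type*} (G : SimpleGraph V) (S : Finset V) : Prop :=
  IsDissocSet G S ∧ S.card = dissNum G

/-- `uv` is an `α₃`-critical edge of `G`: deleting it increases the dissociation number. -/
def IsAlpha3Critical {V : Type*} (G : SimpleGraph V) (u v : V) : Prop :=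
  G.Adj u v ∧ dissNum G < dissNum (G.deleteEdges {s(u, v)})

/-- `uv` is a `μ₃`-critical edge of `G`: deleting it decreases the `3`-matching number. -/
def IsMu3Critical {V : Type*} (G : SimpleGraph V) (u v : V) : Prop :=
  G.Adj u v ∧ kMatchNum (G.deleteEdges {s(u, v)}) 3 < kMatchNum G 3

/-- An insulated `α₃`-critical edge: an `α₃`-critical edge sharing no end-vertex with any
other `α₃`-critical edge. -/
def IsInsulated {V : Type*} (G : SimpleGraph V) (u v : V) : Prop :=
  IsAlpha3Critical G u v ∧
    ∀ x y : V, IsAlpha3Critical G x y → s(x, y) ≠ s(u, v) →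
      x ≠ u ∧ x ≠ v ∧ y ≠ u ∧ y ≠ v

/-- A flexible vertex: one lying in some but not all maximum dissociation sets. -/
def IsFlexible {V : Type*} (G : SimpleGraph V) (v : V) : Prop :=
  (∃ S : Finset V, IsMaxDissocSet G S ∧ v ∈ S) ∧
    (∃ S : Finset V, IsMaxDissocSet G S ∧ v ∉ S)

/-- The set of static-included vertices: vertices lying in every maximum dissociation set. -/
def staticIncluded {V : Type*} (G : SimpleGraph V) : Set V :=
  {v | ∀ S : Finset V, IsMaxDissocSet G S → v ∈ S}

/-- The set of static-excluded vertices: vertices lying in no maximum dissociation set. -/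
def staticExcluded {V : Type*} (G : SimpleGraph V) : Set V :=
  {v | ∀ S : Finset V, IsMaxDissocSet G S → v ∉ S}

/-- The (unordered) edge `uv` occurs as an edge of the path recorded by the list `l`. -/
def EdgeInList {V : Type*} (l : List V) (u v : V) : Prop :=
  ∃ p ∈ l.zip l.tail, p = (u, v) ∨ p = (v, u)

/-!
Complements of `k`-independent sets are the `k`-vertex covers, so `α_k(G) + τ_k(G) = |V(G)|`, and it
remains to see that `μ_k(G) = τ_k(G)` for a forest. Root every component. Each connected set of
vertices then has a unique shallowest vertex, its top. If `P` is a `k`-path whose top `r` is as deep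
as possible, then every `k`-path meeting `P` passes through `r`: both are closed under taking
parents up to their tops, and the other top is no deeper than `r`. Put `P` in the matching and `r`
in the cover, discard the `k`-paths through `r`, and repeat.
-/

/-- A depth function of a rooted forest: every edge joins vertices of different depths, and each
vertex has at most one shallower neighbour, its parent. It encodes a choice of roots while naming
neither the roots nor the parent map, and so it restricts to induced subgraphs. -/
structure IsDepth {V : Type*} (G : SimpleGraph V) (d : V → ℕ) : Prop where
  ne_of_adj : ∀ ⦃u v⦄, G.Adj u v → d u ≠ d v
  parent_unique : ∀ ⦃v u w⦄, G.Adj v u → d u < d v → G.Adj v w → d w < d v → u = w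

section Depth

variable {V : Type*} {G : SimpleGraph V}

theorem eq_penultimate_of_adj_of_dist_lt (hG : G.IsAcyclic) {r u v : V} {p : G.Walk r v}
    (hp : p.IsPath) (huv : G.Adj v u) (hlt : G.dist r u < G.dist r v) : u = p.penultimate := by
  classical
  obtain ⟨q, hq, hq_length⟩ := (p.reachable.trans huv.reachable).exists_path_of_dist
  have hv : v ∉ q.support := fun hv ↦ hlt.not_ge <|
    calc G.dist r v ≤ (q.takeUntil v hv).length := dist_le _
      _ ≤ q.length := q.length_takeUntil_le_length hv
      _ = G.dist r u := hq_length
  exact hG.eq_penultimate_of_adj_end hp huv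
    (hG.mem_support_of_ne_mem_support_of_adj_of_isPath hp hq huv hv)

theorem exists_isDepth_of_isAcyclic (hG : G.IsAcyclic) : ∃ d : V → ℕ, IsDepth G d := by
  let root (v : V) : V := (G.connectedComponentMk v).out
  have root_eq {u v : V} (huv : G.Adj u v) : root u = root v :=
    congrArg Quot.out (ConnectedComponent.sound huv.reachable)
  have root_reachable (v : V) : G.Reachable (root v) v := ConnectedComponent.exact (Quot.out_eq _)
  refine ⟨fun v ↦ G.dist (root v) v, fun u v huv ↦ ?_, fun v u w hu hdu hw hdw ↦ ?_⟩
  · simpa only [← root_eq huv] using hG.dist_ne_of_adj huv (root_reachable u)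
  · obtain ⟨p, hp⟩ := (root_reachable v).exists_isPath
    rw [← root_eq hu] at hdu
    rw [← root_eq hw] at hdw
    exact (eq_penultimate_of_adj_of_dist_lt hG hp hu hdu).trans
      (eq_penultimate_of_adj_of_dist_lt hG hp hw hdw).symm

namespace IsDepth

variable {d : V → ℕ}

theorem induce (hd : IsDepth G d) (s : Set V) : IsDepth (G.induce s) fun v ↦ d v where
  ne_of_adj _ _ huv := hd.ne_of_adj huv
  parent_unique _ _ _ hu hdu hw hdw := Subtype.ext (hd.parent_unique hu hdu hw hdw)

-- A path that starts by descending can never climb again: at its first turning point the vertices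
-- before and after would both be the parent.
theorem snd_lt_of_le (hd : IsDepth G d) {u v : V} {p : G.Walk u v} (hp : p.IsPath) (hne : u ≠ v)
    (hle : d v ≤ d u) : d p.snd < d u := by
  induction p with
  | nil => exact absurd rfl hne
  | @cons u x v hux p ih =>
    rw [Walk.snd_cons]
    obtain ⟨hp, hu⟩ := (Walk.cons_isPath_iff _ _).mp hp
    by_contra! hux_le
    have hux_lt : d u < d x := hux_le.lt_of_ne (hd.ne_of_adj hux)
    have hxv : x ≠ v := by
      rintro rfl
      exact hle.not_gt hux_lt
    have hsnd : d p.snd < d x := ih hp hxv (hle.trans hux_le)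
    have hu_eq : u = p.snd := hd.parent_unique hux.symm hux_lt
      (p.adj_snd (Walk.not_nil_of_ne hxv)) hsnd
    exact hu (hu_eq ▸ p.getVert_mem_support 1)

theorem exists_parent_mem (hd : IsDepth G d) {s : Set V} (hs : (G.induce s).Preconnected)
    {u v : V} (hu : u ∈ s) (hv : v ∈ s) (hne : u ≠ v) (hle : d v ≤ d u) :
    ∃ w ∈ s, G.Adj u w ∧ d w < d u := by
  obtain ⟨p, hp⟩ := (hs ⟨u, hu⟩ ⟨v, hv⟩).exists_isPath
  have hne' : (⟨u, hu⟩ : s) ≠ ⟨v, hv⟩ := fun h ↦ hne (congrArg Subtype.val h)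
  exact ⟨p.snd, p.snd.2, p.adj_snd (Walk.not_nil_of_ne hne'),
    (hd.induce s).snd_lt_of_le hp hne' hle⟩

theorem mem_of_inter_nonempty (hd : IsDepth G d) {s t : Set V} (hs : (G.induce s).Preconnected)
    (ht : (G.induce t).Preconnected) {r q : V} (hr : MinimalFor (· ∈ s) d r) (hq : q ∈ t)
    (hqr : d q ≤ d r) (hst : (s ∩ t).Nonempty) : r ∈ t := by
  obtain ⟨x, ⟨hxs, hxt⟩, hx_min⟩ := exists_minimalFor_of_wellFoundedLT (· ∈ s ∩ t) d hst
  have hrx : d r ≤ d x := (le_total _ _).elim id (hr.2 hxs)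
  by_contra hrt
  obtain ⟨w, hws, hxw, hwx⟩ := hd.exists_parent_mem hs hxs hr.1 (fun h ↦ hrt (h ▸ hxt)) hrx
  have hrw : d r ≤ d w := (le_total _ _).elim id (hr.2 hws)
  have hxq : x ≠ q := by
    rintro rfl
    exact (hrw.trans_lt hwx).not_ge hqr
  obtain ⟨w', hwt, hxw', hwx'⟩ := hd.exists_parent_mem ht hxt hq hxq (hqr.trans hrx)
  obtain rfl : w = w' := hd.parent_unique hxw hwx hxw' hwx'
  exact hwx.not_ge (hx_min ⟨hws, hwt⟩ hwx.le)

end IsDepth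

end Depth

section ConnectedFamily

variable {V ι : Type*} {G : SimpleGraph V} {F : Finset ι} {f : ι → Set V}

theorem exists_mem_forall_mem_of_inter_nonempty (hG : G.IsAcyclic) (hF : F.Nonempty)
    (hf : ∀ i ∈ F, (G.induce (f i)).Connected) :
    ∃ i ∈ F, ∃ r ∈ f i, ∀ j ∈ F, (f i ∩ f j).Nonempty → r ∈ f j := by
  obtain ⟨d, hd⟩ := exists_isDepth_of_isAcyclic hG
  have exists_top (i : ι) (hi : i ∈ F) : ∃ r, MinimalFor (· ∈ f i) d r :=
    exists_minimalFor_of_wellFoundedLT _ d (Set.nonempty_coe_sort.mp (hf i hi).nonempty)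
  have : Nonempty V := hF.elim fun i hi ↦ (exists_top i hi).nonempty
  choose! top htop using exists_top
  obtain ⟨i, hi, hi_deepest⟩ := F.exists_max_image (fun i ↦ d (top i)) hF
  exact ⟨i, hi, top i, (htop i hi).1, fun j hj hij ↦
    hd.mem_of_inter_nonempty (hf i hi).preconnected (hf j hj).preconnected (htop i hi)
      (htop j hj).1 (hi_deepest j hj) hij⟩

theorem exists_pairwiseDisjoint_hitting_card_le (hG : G.IsAcyclic)
    (hf : ∀ i ∈ F, (G.induce (f i)).Connected) :
    ∃ M ⊆ F, ∃ C : Finset V, (M : Set ι).PairwiseDisjoint f ∧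
      (∀ i ∈ F, ∃ v ∈ f i, v ∈ C) ∧ C.card ≤ M.card := by
  classical
  induction F using Finset.strongInduction with
  | H F ih =>
    rcases F.eq_empty_or_nonempty with rfl | hF
    · exact ⟨∅, subset_rfl, ∅, by simp⟩
    obtain ⟨i, hi, r, hr, hr_mem⟩ := exists_mem_forall_mem_of_inter_nonempty hG hF hf
    have hss : {j ∈ F | r ∉ f j} ⊂ F := Finset.filter_ssubset.mpr ⟨i, hi, not_not.mpr hr⟩
    obtain ⟨M, hMF, C, hM, hC, hcard⟩ := ih _ hss fun j hj ↦ hf j (hss.subset hj)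
    have hMr (j : ι) (hj : j ∈ M) : r ∉ f j := (Finset.mem_filter.mp (hMF hj)).2
    have hiM : i ∉ M := fun h ↦ hMr i h hr
    have hdisj (j : ι) (hj : j ∈ M) : Disjoint (f i) (f j) := by
      by_contra h
      exact hMr j hj (hr_mem j (hss.subset (hMF hj)) (Set.not_disjoint_iff_nonempty_inter.mp h))
    refine ⟨insert i M, Finset.insert_subset hi (hMF.trans hss.subset), insert r C, ?_, ?_, ?_⟩
    · rw [Finset.coe_insert]
      exact hM.insert fun j hj _ ↦ hdisj j hj
    · intro j hj
      by_cases hrj : r ∈ f j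
      · exact ⟨r, hrj, Finset.mem_insert_self r C⟩
      · obtain ⟨v, hvj, hvC⟩ := hC j (Finset.mem_filter.mpr ⟨hj, hrj⟩)
        exact ⟨v, hvj, Finset.mem_insert_of_mem hvC⟩
    · calc (insert r C).card ≤ C.card + 1 := Finset.card_insert_le r C
        _ ≤ M.card + 1 := by gcongr
        _ = (insert i M).card := (Finset.card_insert_of_notMem hiM).symm

end ConnectedFamily

section KPaths

variable {V : Type*} {G : SimpleGraph V} {k : ℕ}

theorem IsKPath.ne_nil {l : List V} (hl : IsKPath G k l) (hk : k ≠ 0) : l ≠ [] :=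
  List.ne_nil_of_length_pos (hl.1 ▸ Nat.pos_of_ne_zero hk)

theorem IsKPath.connected_induce {l : List V} (hl : IsKPath G k l) (hk : k ≠ 0) :
    (G.induce {v | v ∈ l}).Connected := by
  let p := Walk.ofSupport l (hl.ne_nil hk) hl.2.2
  have hp : p.support = l := Walk.support_ofSupport _ _
  exact hp ▸ p.connected_induce_support

theorem finite_setOf_isKPath [Finite V] (G : SimpleGraph V) (k : ℕ) : {l | IsKPath G k l}.Finite :=
  (List.finite_length_eq V k).subset fun _ hl ↦ hl.1

theorem IsKMatching.card_le_card_of_isKCover {M : Finset (List V)} {C : Finset V}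
    (hM : IsKMatching G k M) (hC : IsKCover G k C) : M.card ≤ C.card :=
  Finset.card_le_card_of_forall_subsingleton (fun l v ↦ v ∈ l)
    (fun l hl ↦ (hC l (hM.1 l hl)).imp fun _ h ↦ h.symm)
    fun v _ _ hl _ hl' ↦ hM.2.eq hl.1 hl'.1 fun h ↦ h v hl.2 hl'.2

theorem kMatchNum_eq_kCoverNum_of_card_le {M : Finset (List V)} {C : Finset V}
    (hM : IsKMatching G k M) (hC : IsKCover G k C) (h : C.card ≤ M.card) :
    kMatchNum G k = kCoverNum G k := by
  have hμ : kMatchNum G k = M.card := IsGreatest.csSup_eq ⟨⟨M, hM, rfl⟩, by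
    rintro _ ⟨N, hN, rfl⟩
    exact (hN.card_le_card_of_isKCover hC).trans h⟩
  have hτ : kCoverNum G k = C.card := IsLeast.csInf_eq ⟨⟨C, hC, rfl⟩, by
    rintro _ ⟨D, hD, rfl⟩
    exact h.trans (hM.card_le_card_of_isKCover hD)⟩
  rw [hμ, hτ]
  exact (hM.card_le_card_of_isKCover hC).antisymm h

theorem kMatchNum_eq_kCoverNum_of_isAcyclic [Finite V] (hG : G.IsAcyclic) (hk : k ≠ 0) :
    kMatchNum G k = kCoverNum G k := by
  let F : Finset (List V) := (finite_setOf_isKPath G k).toFinset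
  have mem_F {l : List V} : l ∈ F ↔ IsKPath G k l := Set.Finite.mem_toFinset _
  obtain ⟨M, hMF, C, hM, hC, hcard⟩ := exists_pairwiseDisjoint_hitting_card_le (F := F)
    (f := fun l ↦ {v | v ∈ l}) hG fun l hl ↦ (mem_F.mp hl).connected_induce hk
  have hM_matching : IsKMatching G k M := ⟨fun l hl ↦ mem_F.mp (hMF hl),
    fun _ hl _ hl' hne _ hv ↦ Set.disjoint_left.mp (hM hl hl' hne) hv⟩
  exact kMatchNum_eq_kCoverNum_of_card_le hM_matching (fun l hl ↦ hC l (mem_F.mpr hl)) hcard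

theorem isKIndepSet_compl_iff [Fintype V] [DecidableEq V] {C : Finset V} :
    IsKIndepSet G k Cᶜ ↔ IsKCover G k C := by
  simp only [IsKIndepSet, IsKCover, Finset.mem_compl, not_forall, not_not, exists_prop]

theorem isKCover_univ [Fintype V] (hk : k ≠ 0) : IsKCover G k Finset.univ := fun l hl ↦
  (List.exists_mem_of_ne_nil l (hl.ne_nil hk)).imp fun v hv ↦ ⟨hv, Finset.mem_univ v⟩

theorem kIndepNum_add_kCoverNum [Fintype V] (G : SimpleGraph V) (hk : k ≠ 0) :
    kIndepNum G k + kCoverNum G k = Fintype.card V := by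
  classical
  obtain ⟨C, hC, hC_card⟩ : ∃ C, IsKCover G k C ∧ C.card = kCoverNum G k :=
    Nat.sInf_mem (s := {n | ∃ C : Finset V, IsKCover G k C ∧ C.card = n})
      ⟨_, Finset.univ, isKCover_univ hk, rfl⟩
  have hα : kIndepNum G k = Cᶜ.card := IsGreatest.csSup_eq
    ⟨⟨Cᶜ, isKIndepSet_compl_iff.mpr hC, rfl⟩, by
      rintro _ ⟨S, hS, rfl⟩
      have hS_cover : IsKCover G k Sᶜ := isKIndepSet_compl_iff.mp (by rwa [compl_compl])
      have hCS : C.card ≤ Sᶜ.card := hC_card ▸ Nat.sInf_le ⟨Sᶜ, hS_cover, rfl⟩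
      have := S.card_add_card_compl
      have := C.card_add_card_compl
      lia⟩
  rw [hα, ← hC_card, Finset.card_compl_add_card]

end KPaths

/-- For every integer `k ≥ 2`, every forest `G` satisfies `α_k(G) + μ_k(G) = |V(G)|`,
i.e. every forest is a `k`-König–Egerváry graph. -/
theorem forest_kIndepNum_add_kMatchNum {V : Type*} [Fintype V] [DecidableEq V]
    (G : SimpleGraph V) (hG : G.IsAcyclic) (k : ℕ) (hk : 2 ≤ k) :
    kIndepNum G k + kMatchNum G k = Fintype.card V := by
  rw [kMatchNum_eq_kCoverNum_of_isAcyclic hG (by lia), kIndepNum_add_kCoverNum G (by lia)]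
end

section
/- For every integer k ≥ 2 and every forest G, the k-vertex cover number equals the k-matching number: τ_k(G) = μ_k(G). -/
open SimpleGraph

/-!
Root a component of the forest at `r` and call the vertex of a subtree closest to `r` its top.
Among finitely many subtrees of that component pick one, `S`, whose top `a` is deepest. A subtree
`T` meeting `S` at `x` contains `a`: the path from `r` to `x` is unique, it enters `T` no later
than `S`, and it stays in `T` from then on. Putting `S` into the matching and `a` into the
cover, deleting the subtrees through `a` and repeating yields as many disjoint subtrees as cover
vertices. If infinitely many paths occur, their finiteness as vertex sets lets the bound on covers
of finite subfamilies pass to the whole family.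
-/

section Transversals

variable {V ι : Type*} {s : ι → Set V}

/-- `C` is a transversal of the members `s i`, `i ∈ A`, of the family `s`: a finite set of
vertices meeting each of them. -/
def IsTransversal (s : ι → Set V) (A : Set ι) (C : Finset V) : Prop :=
  ∀ i ∈ A, ∃ v ∈ s i, v ∈ C

theorem IsTransversal.insert [DecidableEq V] {A : Set ι} {C : Finset V} {v : V}
    (hC : IsTransversal s {i ∈ A | v ∉ s i} C) : IsTransversal s A (insert v C) := by
  intro i hi
  by_cases hv : v ∈ s i
  · exact ⟨v, hv, Finset.mem_insert_self v C⟩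
  · obtain ⟨w, hw, hwC⟩ := hC i ⟨hi, hv⟩
    exact ⟨w, hw, Finset.mem_insert_of_mem hwC⟩

/-- Induction step: if no family `{j ∈ A | v ∉ s j}` has a transversal of size at most `n`, then
each vertex `v` of a fixed `s i` has a finite obstruction `E v` in that family, and `{i}` with these
finitely many obstructions has no transversal of size at most `n + 1`. -/
theorem exists_isTransversal_of_forall_finset {n : ℕ} {A : Set ι}
    (hfin : ∀ i ∈ A, (s i).Finite)
    (h : ∀ F : Finset ι, ↑F ⊆ A → ∃ C : Finset V, IsTransversal s F C ∧ C.card ≤ n) :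
    ∃ C : Finset V, IsTransversal s A C ∧ C.card ≤ n := by
  classical
  induction n generalizing A with
  | zero =>
    refine ⟨∅, fun i hi => ?_, Nat.le_refl 0⟩
    obtain ⟨C, hC, hcard⟩ := h {i} (by simpa using hi)
    obtain rfl : C = ∅ := by simpa using hcard
    exact hC i (by simp)
  | succ n ih =>
    rcases A.eq_empty_or_nonempty with rfl | ⟨i, hi⟩
    · exact ⟨∅, by simp [IsTransversal], by simp⟩
    by_cases hv : ∃ v, ∃ C : Finset V, IsTransversal s {j ∈ A | v ∉ s j} C ∧ C.card ≤ n
    · obtain ⟨v, C, hC, hcard⟩ := hv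
      exact ⟨insert v C, hC.insert, (Finset.card_insert_le v C).trans (Nat.succ_le_succ hcard)⟩
    · have hobstruction (v : V) : ∃ E : Finset ι, ↑E ⊆ {j ∈ A | v ∉ s j} ∧
          ∀ C : Finset V, IsTransversal s E C → n < C.card := by
        by_contra! hgood
        exact hv ⟨v, ih (fun j hj => hfin j hj.1) hgood⟩
      choose E hEA hE using hobstruction
      let F : Finset ι := insert i ((hfin i hi).toFinset.biUnion E)
      have hFA : ↑F ⊆ A := by
        intro j hj
        rcases Finset.mem_insert.1 hj with rfl | hj
        · exact hi
        · obtain ⟨v, -, hj⟩ := Finset.mem_biUnion.1 hj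
          exact (hEA v hj).1
      obtain ⟨C, hC, hcard⟩ := h F hFA
      obtain ⟨v, hvi, hvC⟩ := hC i (Finset.mem_insert_self i _)
      have hCE : IsTransversal s (E v) (C.erase v) := by
        intro j hj
        obtain ⟨w, hwj, hwC⟩ := hC j (Finset.mem_insert_of_mem
          (Finset.mem_biUnion.2 ⟨v, (hfin i hi).mem_toFinset.2 hvi, hj⟩))
        exact ⟨w, hwj, Finset.mem_erase.2 ⟨fun hwv => (hEA v hj).2 (hwv ▸ hwj), hwC⟩⟩
      have hlt := hE v _ hCE
      rw [Finset.card_erase_of_mem hvC] at hlt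
      omega

end Transversals

section SubtreeFamilies

variable {V ι : Type*} {G : SimpleGraph V}

theorem isPath_append_of_forall_mem_support {u v w : V} {p : G.Walk u v} {q : G.Walk v w}
    (hp : p.IsPath) (hq : q.IsPath) (h : ∀ x ∈ p.support, x ∈ q.support → x = v) :
    (p.append q).IsPath := by
  have hv : v ∉ q.support.tail :=
    (List.nodup_cons.1 (q.cons_tail_support.symm ▸ hq.support_nodup)).1
  rw [Walk.isPath_def, Walk.support_append, List.nodup_append']
  refine ⟨hp.support_nodup, hq.support_nodup.tail, fun x hxp hxq => hv ?_⟩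
  exact h x hxp (List.mem_of_mem_tail hxq) ▸ hxq

theorem reachable_of_preconnected_induce {s : Set V} (hs : (G.induce s).Preconnected) {u v : V}
    (hu : u ∈ s) (hv : v ∈ s) : G.Reachable u v :=
  (hs ⟨u, hu⟩ ⟨v, hv⟩).map (Embedding.induce s).toHom

theorem exists_isPath_support_subset {s : Set V} (hs : (G.induce s).Preconnected) {u v : V}
    (hu : u ∈ s) (hv : v ∈ s) : ∃ p : G.Walk u v, p.IsPath ∧ ∀ x ∈ p.support, x ∈ s := by
  obtain ⟨p, hp⟩ := (hs ⟨u, hu⟩ ⟨v, hv⟩).exists_isPath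
  let inclusion := Embedding.induce (G := G) s
  refine ⟨p.map inclusion.toHom, hp.map inclusion.injective, ?_⟩
  intro x hx
  obtain ⟨y, -, rfl⟩ := List.mem_map.1 (p.support_map inclusion.toHom ▸ hx)
  exact y.2

theorem exists_isPath_append_of_isMinOn_dist {r a x : V} {s : Set V}
    (hs : (G.induce s).Preconnected) (ha : a ∈ s) (hmin : IsMinOn (G.dist r) s a) (hx : x ∈ s)
    (hr : G.Reachable r a) :
    ∃ (p : G.Walk r a) (q : G.Walk a x),
      (p.append q).IsPath ∧ p.length = G.dist r a ∧ ∀ y ∈ q.support, y ∈ s := by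
  classical
  obtain ⟨p, hp, hlen⟩ := hr.exists_path_of_dist
  obtain ⟨q, hq, hqs⟩ := exists_isPath_support_subset hs ha hx
  refine ⟨p, q, isPath_append_of_forall_mem_support hp hq fun y hyp hyq => ?_, hlen, hqs⟩
  by_contra hya
  have hlt : G.dist r y < p.length :=
    (dist_le (p.takeUntil y hyp)).trans_lt (p.length_takeUntil_lt_length hyp hya)
  have hge : G.dist r a ≤ G.dist r y := hmin (hqs y hyq)
  omega

theorem mem_of_isMinOn_dist_of_dist_le (hG : G.IsAcyclic) {r a b x : V} {s t : Set V}
    (hs : (G.induce s).Preconnected) (ht : (G.induce t).Preconnected)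
    (ha : a ∈ s) (hamin : IsMinOn (G.dist r) s a)
    (hb : b ∈ t) (hbmin : IsMinOn (G.dist r) t b)
    (hxs : x ∈ s) (hxt : x ∈ t) (hr : G.Reachable r x) (hle : G.dist r b ≤ G.dist r a) :
    a ∈ t := by
  have hra : G.Reachable r a := hr.trans (reachable_of_preconnected_induce hs hxs ha)
  have hrb : G.Reachable r b := hr.trans (reachable_of_preconnected_induce ht hxt hb)
  obtain ⟨p, q, hpq, hp, -⟩ := exists_isPath_append_of_isMinOn_dist hs ha hamin hxs hra
  obtain ⟨p', q', hpq', hp', hq't⟩ := exists_isPath_append_of_isMinOn_dist ht hb hbmin hxt hrb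
  have heq : p.append q = p'.append q' :=
    congrArg Subtype.val ((hG.subsingleton_path r x).elim ⟨_, hpq⟩ ⟨_, hpq'⟩)
  have hget : a = q'.getVert (G.dist r a - G.dist r b) := by
    calc a = (p.append q).getVert (G.dist r a) := by simp [Walk.getVert_append, hp]
      _ = (p'.append q').getVert (G.dist r a) := by rw [heq]
      _ = q'.getVert (G.dist r a - G.dist r b) := by
        rw [Walk.getVert_append, hp', if_neg hle.not_gt]
  rw [hget]
  exact hq't _ (q'.getVert_mem_support _)

theorem exists_mem_forall_mem_of_not_disjoint (hG : G.IsAcyclic) {F : Finset ι}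
    (hF : F.Nonempty) {s : ι → Set V} (hs : ∀ i ∈ F, (G.induce (s i)).Connected) :
    ∃ i ∈ F, ∃ v ∈ s i, ∀ j ∈ F, ¬ Disjoint (s i) (s j) → v ∈ s j := by
  classical
  obtain ⟨i₀, hi₀⟩ := hF
  obtain ⟨r, hr⟩ := (hs i₀ hi₀).nonempty
  have hmin (i : ι) (hi : i ∈ F) : ∃ a ∈ s i, IsMinOn (G.dist r) (s i) a :=
    have hne := Set.nonempty_coe_sort.1 (hs i hi).nonempty
    ⟨Function.argminOn (G.dist r) (s i) hne, Function.argminOn_mem ..,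
      isMinOn_iff.2 fun _ hx => Function.argminOn_le _ _ hx⟩
  have : Nonempty V := ⟨r⟩
  choose! a ha hamin using hmin
  obtain ⟨i, hi, hmax⟩ := Finset.exists_max_image (F.filter fun i => G.Reachable r (a i))
    (fun i => G.dist r (a i)) ⟨i₀, Finset.mem_filter.2 ⟨hi₀,
      reachable_of_preconnected_induce (hs i₀ hi₀).preconnected hr (ha i₀ hi₀)⟩⟩
  obtain ⟨hiF, hri⟩ := Finset.mem_filter.1 hi
  refine ⟨i, hiF, a i, ha i hiF, fun j hjF hij => ?_⟩
  obtain ⟨x, hxi, hxj⟩ := Set.not_disjoint_iff.1 hij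
  have hsi := (hs i hiF).preconnected
  have hsj := (hs j hjF).preconnected
  have hrx : G.Reachable r x := hri.trans (reachable_of_preconnected_induce hsi (ha i hiF) hxi)
  have hrj : G.Reachable r (a j) :=
    hrx.trans (reachable_of_preconnected_induce hsj hxj (ha j hjF))
  exact mem_of_isMinOn_dist_of_dist_le hG hsi hsj (ha i hiF) (hamin i hiF)
    (ha j hjF) (hamin j hjF) hxi hxj hrx (hmax j (Finset.mem_filter.2 ⟨hjF, hrj⟩))

theorem exists_pairwiseDisjoint_isTransversal_card_le (hG : G.IsAcyclic) (F : Finset ι)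
    (s : ι → Set V) (hs : ∀ i ∈ F, (G.induce (s i)).Connected) :
    ∃ M ⊆ F, (M : Set ι).PairwiseDisjoint s ∧
      ∃ C : Finset V, IsTransversal s F C ∧ C.card ≤ M.card := by
  classical
  induction F using Finset.strongInduction with
  | H F ih =>
    rcases F.eq_empty_or_nonempty with rfl | hF
    · exact ⟨∅, by simp, by simp, ∅, by simp [IsTransversal], by simp⟩
    obtain ⟨i, hi, v, hv, hmeet⟩ := exists_mem_forall_mem_of_not_disjoint hG hF hs
    obtain ⟨M, hMF, hM, C, hC, hcard⟩ := ih (F.filter fun j => v ∉ s j)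
      (Finset.filter_ssubset.2 ⟨i, hi, not_not.2 hv⟩)
      fun j hj => hs j (Finset.mem_of_mem_filter j hj)
    have hMv (j : ι) (hj : j ∈ M) : j ∈ F ∧ v ∉ s j := Finset.mem_filter.1 (hMF hj)
    have hiM : i ∉ M := fun h => (hMv i h).2 hv
    have hdisj (j : ι) (hj : j ∈ M) : Disjoint (s i) (s j) :=
      not_not.1 fun h => (hMv j hj).2 (hmeet j (hMv j hj).1 h)
    have hCv : IsTransversal s {j ∈ (F : Set ι) | v ∉ s j} C :=
      fun j hj => hC j (Finset.mem_filter.2 hj)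
    refine ⟨insert i M, Finset.insert_subset hi fun j hj => (hMv j hj).1, ?_,
      insert v C, hCv.insert, ?_⟩
    · rw [Finset.coe_insert]
      exact hM.insert fun j hj _ => hdisj j hj
    · rw [Finset.card_insert_of_notMem hiM]
      exact (Finset.card_insert_le v C).trans (Nat.succ_le_succ hcard)

end SubtreeFamilies

section KPaths

variable {V : Type*} {G : SimpleGraph V} {k : ℕ}

theorem IsKCover.bddAbove_card_isKMatching {C : Finset V} (hC : IsKCover G k C) :
    BddAbove {n | ∃ M : Finset (List V), IsKMatching G k M ∧ M.card = n} := by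
  refine ⟨C.card, ?_⟩
  rintro _ ⟨M, hM, rfl⟩
  exact hM.card_le_card_of_isKCover hC

theorem IsKCover.kCoverNum_le_card {C : Finset V} (hC : IsKCover G k C) :
    kCoverNum G k ≤ C.card :=
  Nat.sInf_le ⟨C, hC, rfl⟩

theorem IsKCover.kMatchNum_le_kCoverNum {C : Finset V} (hC : IsKCover G k C) :
    kMatchNum G k ≤ kCoverNum G k := by
  refine csSup_le ⟨0, ∅, by simp [IsKMatching], rfl⟩ ?_
  rintro _ ⟨M, hM, rfl⟩
  refine le_csInf ⟨_, C, hC, rfl⟩ ?_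
  rintro _ ⟨C', hC', rfl⟩
  exact hM.card_le_card_of_isKCover hC'

theorem exists_isKCover_card_le_kMatchNum (hG : G.IsAcyclic) (hk : k ≠ 0)
    (hbdd : BddAbove {n | ∃ M : Finset (List V), IsKMatching G k M ∧ M.card = n}) :
    ∃ C : Finset V, IsKCover G k C ∧ C.card ≤ kMatchNum G k := by
  refine exists_isTransversal_of_forall_finset (s := fun l : List V => {v | v ∈ l})
    (A := {l | IsKPath G k l}) (fun l _ => l.finite_toSet) fun F hF => ?_
  obtain ⟨M, hMF, hdisj, C, hC, hcard⟩ := exists_pairwiseDisjoint_isTransversal_card_le hG F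
    (fun l => {v | v ∈ l}) fun l hl => (hF hl).connected_induce hk
  have hM : IsKMatching G k M :=
    ⟨fun l hl => hF (hMF hl), fun l hl l' hl' hne _ hv hv' =>
      Set.disjoint_left.1 (hdisj hl hl' hne) hv hv'⟩
  exact ⟨C, hC, hcard.trans (le_csSup hbdd ⟨M, hM, rfl⟩)⟩

end KPaths

theorem forest_kCoverNum_eq_kMatchNum_general {V : Type*} (G : SimpleGraph V)
    (hG : G.IsAcyclic) (k : ℕ) (hk : k ≠ 0)
    (hbdd : BddAbove {n | ∃ M : Finset (List V), IsKMatching G k M ∧ M.card = n}) :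
    kCoverNum G k = kMatchNum G k := by
  obtain ⟨C, hC, hcard⟩ := exists_isKCover_card_le_kMatchNum hG hk hbdd
  exact le_antisymm (hC.kCoverNum_le_card.trans hcard) hC.kMatchNum_le_kCoverNum

/-- For every integer `k ≥ 2` and every forest `G`, the `k`-vertex cover number equals
the `k`-matching number: `τ_k(G) = μ_k(G)`. -/
theorem forest_kCoverNum_eq_kMatchNum {V : Type*} [Fintype V] [DecidableEq V]
    (G : SimpleGraph V) (hG : G.IsAcyclic) (k : ℕ) (hk : 2 ≤ k) :
    kCoverNum G k = kMatchNum G k := by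
  have hk' : k ≠ 0 := by omega
  exact forest_kCoverNum_eq_kMatchNum_general G hG k hk'
    (isKCover_univ hk').bddAbove_card_isKMatching
end

section
/- Let T be a tree. Then every maximum dissociation set of T contains at least one end-vertex of each α₃-critical edge of T. -/
open SimpleGraph

/-!
Suppose a maximum dissociation set `S` misses both ends of a critical bridge `uv` of `G`, and let
`S'` be a larger dissociation set of `G - uv`. Let `A` be the component of `u` in `G - uv`, so that
`v ∉ A`. Exchanging `S` and `S'` across `A` gives two sets that are dissociation sets of `G - uv`;
each takes one end of `uv` from the side where it agrees with `S`, hence misses that end and is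
also a dissociation set of `G`. Their sizes sum to `|S| + |S'| > 2 |S|`, contradicting maximality.
-/

section Dissociation

variable {V : Type*} {G H : SimpleGraph V} {S : Finset V} {u v : V}

theorem IsDissocSet.anti_graph (hGH : G ≤ H) (hS : IsDissocSet H S) : IsDissocSet G S :=
  fun x hx y hy z hz hxy hxz => hS x hx y hy z hz (hGH hxy) (hGH hxz)

theorem IsDissocSet.of_deleteEdges (hS : IsDissocSet (G.deleteEdges {s(u, v)}) S)
    (huv : ¬ (u ∈ S ∧ v ∈ S)) : IsDissocSet G S := by
  have adj_deleteEdges {x y : V} (hx : x ∈ S) (hy : y ∈ S) (hxy : G.Adj x y) :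
      (G.deleteEdges {s(u, v)}).Adj x y := by
    rw [deleteEdges_adj, Set.mem_singleton_iff, Sym2.eq_iff]
    grind
  exact fun x hx y hy z hz hxy hxz =>
    hS x hx y hy z hz (adj_deleteEdges hx hy hxy) (adj_deleteEdges hx hz hxz)

/-- The set of cardinalities of the finite dissociation sets of `G`, whose supremum is `dissNum G`.
Its boundedness replaces finiteness of `G`: if it is unbounded, `dissNum G` is the junk value `0`.
-/
def dissocCards (G : SimpleGraph V) : Set ℕ :=
  {n | ∃ S : Finset V, IsDissocSet G S ∧ S.card = n}

theorem dissocCards_anti (hGH : G ≤ H) : dissocCards H ⊆ dissocCards G :=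
  fun _ ⟨S, hS, hcard⟩ => ⟨S, hS.anti_graph hGH, hcard⟩

theorem bddAbove_dissocCards_of_dissNum_ne_zero (h : dissNum G ≠ 0) :
    BddAbove (dissocCards G) := by
  contrapose! h
  exact Nat.sSup_of_not_bddAbove h

theorem IsDissocSet.card_le_dissNum (hS : IsDissocSet G S) (hG : BddAbove (dissocCards G)) :
    S.card ≤ dissNum G :=
  le_csSup hG ⟨S, hS, rfl⟩

theorem exists_isDissocSet_lt_card {n : ℕ} (hn : n < dissNum G) :
    ∃ S : Finset V, IsDissocSet G S ∧ n < S.card := by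
  obtain ⟨_, ⟨S, hS, rfl⟩, hnS⟩ := exists_lt_of_lt_csSup' hn
  exact ⟨S, hS, hnS⟩

end Dissociation

section Splice

variable {V : Type*} {G : SimpleGraph V} {A : Set V} {P Q : Finset V}

open Classical in
/-- The finite set that agrees with `P` on `A` and with `Q` off `A`; it is `A.ite P Q` as a
`Finset`, used to exchange two dissociation sets across a cut. -/
noncomputable def splice (A : Set V) (P Q : Finset V) : Finset V :=
  {x ∈ P | x ∈ A} ∪ {x ∈ Q | x ∉ A}

theorem mem_splice_of_mem {x : V} (hx : x ∈ A) : x ∈ splice A P Q ↔ x ∈ P := by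
  simp [splice, hx]

theorem mem_splice_of_notMem {x : V} (hx : x ∉ A) : x ∈ splice A P Q ↔ x ∈ Q := by
  simp [splice, hx]

theorem card_splice_add_card_splice (A : Set V) (P Q : Finset V) :
    (splice A P Q).card + (splice A Q P).card = P.card + Q.card := by
  classical
  have card_splice (P Q : Finset V) :
      (splice A P Q).card = {x ∈ P | x ∈ A}.card + {x ∈ Q | x ∉ A}.card := by
    rw [splice, Finset.card_union_of_disjoint (Finset.disjoint_filter_filter_not P Q (· ∈ A))]
  have hP := P.card_filter_add_card_filter_not (· ∈ A)
  have hQ := Q.card_filter_add_card_filter_not (· ∈ A)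
  rw [card_splice, card_splice]
  omega

protected theorem IsDissocSet.splice (hP : IsDissocSet G P) (hQ : IsDissocSet G Q)
    (hA : ∀ x y, G.Adj x y → (x ∈ A ↔ y ∈ A)) : IsDissocSet G (splice A P Q) := by
  intro x hx y hy z hz hxy hxz
  by_cases hxA : x ∈ A
  · rw [mem_splice_of_mem hxA] at hx
    rw [mem_splice_of_mem ((hA x y hxy).1 hxA)] at hy
    rw [mem_splice_of_mem ((hA x z hxz).1 hxA)] at hz
    exact hP x hx y hy z hz hxy hxz
  · rw [mem_splice_of_notMem hxA] at hx
    rw [mem_splice_of_notMem (mt (hA x y hxy).2 hxA)] at hy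
    rw [mem_splice_of_notMem (mt (hA x z hxz).2 hxA)] at hz
    exact hQ x hx y hy z hz hxy hxz

theorem IsDissocSet.card_add_card_le_of_isBridge {u v : V} (hbridge : G.IsBridge s(u, v))
    (hG : BddAbove (dissocCards G)) (hP : IsDissocSet (G.deleteEdges {s(u, v)}) P)
    (hQ : IsDissocSet (G.deleteEdges {s(u, v)}) Q) (huP : u ∉ P) (hvP : v ∉ P) :
    P.card + Q.card ≤ 2 * dissNum G := by
  let A : Set V := {x | (G.deleteEdges {s(u, v)}).Reachable u x}
  have huA : u ∈ A := Reachable.rfl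
  have hvA : v ∉ A := isBridge_iff.1 hbridge
  have hA (x y : V) (hxy : (G.deleteEdges {s(u, v)}).Adj x y) : x ∈ A ↔ y ∈ A :=
    ⟨fun hx => hx.trans hxy.reachable, fun hy => hy.trans hxy.symm.reachable⟩
  have hPQ : IsDissocSet G (splice A P Q) :=
    (hP.splice hQ hA).of_deleteEdges fun h => huP ((mem_splice_of_mem huA).1 h.1)
  have hQP : IsDissocSet G (splice A Q P) :=
    (hQ.splice hP hA).of_deleteEdges fun h => hvP ((mem_splice_of_notMem hvA).1 h.2)
  calc P.card + Q.card = (splice A P Q).card + (splice A Q P).card :=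
        (card_splice_add_card_splice A P Q).symm
    _ ≤ dissNum G + dissNum G := add_le_add (hPQ.card_le_dissNum hG) (hQP.card_le_dissNum hG)
    _ = 2 * dissNum G := (two_mul _).symm

end Splice

theorem tree_maxDissoc_meets_alpha3Critical_general {V : Type*} {G : SimpleGraph V} {u v : V}
    (hbridge : G.IsBridge s(u, v)) (hcrit : IsAlpha3Critical G u v) {S : Finset V}
    (hS : IsMaxDissocSet G S) : u ∈ S ∨ v ∈ S := by
  by_contra! ⟨hu, hv⟩
  obtain ⟨hSG, hScard⟩ := hS
  obtain ⟨-, hlt⟩ := hcrit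
  have hle : G.deleteEdges {s(u, v)} ≤ G := deleteEdges_le _
  have hG : BddAbove (dissocCards G) :=
    (bddAbove_dissocCards_of_dissNum_ne_zero hlt.ne_bot).mono (dissocCards_anti hle)
  obtain ⟨S', hS', hcard⟩ := exists_isDissocSet_lt_card hlt
  have hsum := (hSG.anti_graph hle).card_add_card_le_of_isBridge hbridge hG hS' hu hv
  omega

/-- Every maximum dissociation set of a tree contains at least one end-vertex of each
`α₃`-critical edge. -/
theorem tree_maxDissoc_meets_alpha3Critical {V : Type*} [Fintype V] [DecidableEq V]
    (T : SimpleGraph V) (hT : T.IsTree) :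
    ∀ u v : V, IsAlpha3Critical T u v →
      ∀ S : Finset V, IsMaxDissocSet T S → u ∈ S ∨ v ∈ S :=
  fun _ _ hcrit _ hS => tree_maxDissoc_meets_alpha3Critical_general
    (isAcyclic_iff_forall_adj_isBridge.1 hT.isAcyclic hcrit.1) hcrit hS
end
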